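/- There exist an open neighborhood V of 0 in ℂ with 1 ∈ ∂V and ε > 0 such that the restriction of û to V is a conformal bijection from V onto the slit disk at u_c of margin ε, and û(H) → u_c as H tends to 1 within V. -/

import Mathlib

noncomputable def nuc : ℝ := 1 + 2 * Real.sqrt 7

noncomputable def tc : ℝ := Real.sqrt 10 / (8 * (7 + Real.sqrt 7) ^ ((3:ℝ)/2))

noncomputable def uc : ℝ := (6/5) * (7 + Real.sqrt 7) * tc

/-- The rational parametrization `û` of the `u`-variable. -/
noncomputable def uhat (H : ℂ) : ℂ :=
  ((uc : ℂ) / 3) * H * (10 - 12 * H + 6 * H ^ 2 - H ^ 3)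

/-- The rational parametrization `Ẑ₀`. -/
noncomputable def Z0hat (H : ℂ) : ℂ :=
  (1/10) * (1 - (1 - (Real.sqrt 7 : ℂ)) * H + 3 * H ^ 2 - H ^ 3)
    * (10 - 12 * H + 6 * H ^ 2 - H ^ 3)

/-- The rational parametrization `Ẑ₁`. -/
noncomputable def Z1hat (H : ℂ) : ℂ :=
  (3 / (10 * (uc : ℂ))) *
    ((Real.sqrt 7 : ℂ) - 1 + H - 3 * (4 - 3 * H + H ^ 2) / (10 - 12 * H + 6 * H ^ 2 - H ^ 3))

/-- The rational parametrization `Â`. -/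
noncomputable def Ahat (H : ℂ) : ℂ :=
  (1/10) * ((((3:ℝ)/2) ^ ((7:ℝ)/3) : ℝ) : ℂ) * (9 - 8 * H + 3 * H ^ 2) / (3 - 3 * H + H ^ 2) ^ 2

/-- The slit disk at `x > 0` of margin `ε > 0`: the open disk of radius `x + ε`
centred at `0`, minus the real segment `[x, x + ε]`. -/
def slitDisk (x ε : ℝ) : Set ℂ :=
  Metric.ball (0 : ℂ) (x + ε) \ (Complex.ofReal '' Set.Icc x (x + ε))

/-!
With `w = 1 - H` one has `u_c - û(H) = (u_c / 3) * P w`, where `P w = w ^ 3 * (w + 2)`, so the task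
is to invert `P` on the slit plane. Let `P w = ∏ i, (w + a i)` with all `a i ≥ 0`, at least two of
which vanish. On the right half-plane `L w = ∑ i, log (w + a i)` is a logarithm of `P` whose
derivative `∑ i, (w + a i)⁻¹` has positive real part, so `L` is injective there, and `P` is
injective on the region `|Im L| < π`. On the imaginary axis the two vanishing `a i` already force
`|Im L| ≥ π`; hence `P` sends the boundary of that region to the negative real axis and `0`. Since
`P` is a closed map, the image of the region is open and closed in the connected slit plane, hence
all of it.
-/

section General

open Set

-- Noshiro–Warschawski: apply the mean value theorem to `Re (f / (b - a))` on the segment `[a, b]`.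
lemma injOn_of_re_deriv_pos {s : Set ℂ} (hs : Convex ℝ s) {f f' : ℂ → ℂ}
    (hf : ∀ z ∈ s, HasDerivAt f (f' z) z) (hf' : ∀ z ∈ s, 0 < (f' z).re) : InjOn f s := by
  intro a ha b hb hab
  by_contra hne
  have hba : b - a ≠ 0 := sub_ne_zero.2 (Ne.symm hne)
  have segment_mem (t : ℝ) (ht : t ∈ Icc (0 : ℝ) 1) : a + t * (b - a) ∈ s := by
    simpa using hs.add_smul_sub_mem ha hb ht
  have hasDerivAt_re_quotient (t : ℝ) (ht : t ∈ Icc (0 : ℝ) 1) :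
      HasDerivAt (fun t : ℝ => (f (a + t * (b - a)) / (b - a)).re)
        (f' (a + t * (b - a))).re t := by
    have hline : HasDerivAt (fun z : ℂ => a + z * (b - a)) (b - a) (t : ℂ) := by
      simpa using ((hasDerivAt_id (t : ℂ)).mul_const (b - a)).const_add a
    have hquot := ((hf _ (segment_mem t ht)).comp (t : ℂ) hline).div_const (b - a)
    rw [mul_div_cancel_right₀ _ hba] at hquot
    exact hquot.real_of_complex
  obtain ⟨c, hc, hslope⟩ := exists_hasDerivAt_eq_slope _ _ zero_lt_one
    (fun t ht => (hasDerivAt_re_quotient t ht).continuousAt.continuousWithinAt)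
    (fun t ht => hasDerivAt_re_quotient t (Ioo_subset_Icc_self ht))
  have hpos := hf' _ (segment_mem c (Ioo_subset_Icc_self hc))
  simp [hslope, hab] at hpos

lemma isOpen_image_of_deriv_ne_zero {U : Set ℂ} (hU : IsOpen U) {f : ℂ → ℂ}
    (hf : DifferentiableOn ℂ f U) (hf' : ∀ z ∈ U, deriv f z ≠ 0) : IsOpen (f '' U) := by
  rw [isOpen_iff_mem_nhds]
  rintro _ ⟨z, hz, rfl⟩
  have hstrict : HasStrictDerivAt f (deriv f z) z :=
    (hf.analyticAt (hU.mem_nhds hz)).hasStrictDerivAt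
  rw [← hstrict.map_nhds_eq (hf' z hz)]
  exact Filter.image_mem_map (hU.mem_nhds hz)

lemma subset_image_of_closure_inter_preimage_subset {X Y : Type*} [TopologicalSpace X]
    [TopologicalSpace Y] {f : X → Y} {s : Set X} {t : Set Y} (ht : IsPreconnected t)
    (hf : IsClosedMap f) (hopen : IsOpen (f '' s)) (hne : (t ∩ f '' s).Nonempty)
    (hs : closure s ∩ f ⁻¹' t ⊆ s) :
    t ⊆ f '' s := by
  refine ht.subset_of_closure_inter_subset hopen hne ?_
  rintro y ⟨hy, hyt⟩
  obtain ⟨x, hx, rfl⟩ := hf.closure_image_subset s hy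
  exact ⟨x, hs ⟨hx, hyt⟩, rfl⟩

end General

section SlitPlane

open Complex
open scoped Real

lemma mem_slitPlane_of_re_nonneg {w : ℂ} (hw : 0 ≤ w.re) (h0 : w ≠ 0) : w ∈ slitPlane := by
  rw [mem_slitPlane_iff]
  by_contra! h
  exact h0 (Complex.ext (le_antisymm h.1 hw) h.2)

lemma add_ofReal_mem_slitPlane {w : ℂ} (hw : w ∈ slitPlane) {x : ℝ} (hx : 0 ≤ x) :
    w + x ∈ slitPlane := by
  rw [mem_slitPlane_iff] at hw ⊢
  simp only [add_re, ofReal_re, add_im, ofReal_im, add_zero]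
  exact hw.imp_left fun h => by linarith

lemma ofReal_mul_mem_slitPlane_iff {c : ℝ} (hc : 0 < c) {z : ℂ} :
    c * z ∈ slitPlane ↔ z ∈ slitPlane := by
  simp [mem_slitPlane_iff, hc, hc.ne']

lemma bijOn_sub_ofReal_mul_slitPlane (b : ℂ) {c : ℝ} (hc : 0 < c) :
    Set.BijOn (fun z : ℂ => b - c * z) slitPlane {z : ℂ | b - z ∈ slitPlane} := by
  have hc' : (c : ℂ) ≠ 0 := ofReal_ne_zero.2 hc.ne'
  refine ⟨fun z hz => ?_, fun z _ z' _ h => mul_left_cancel₀ hc' (sub_right_injective h),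
    fun z hz => ⟨(b - z) / c, ?_, ?_⟩⟩
  · rwa [Set.mem_ofPred_eq, sub_sub_cancel, ofReal_mul_mem_slitPlane_iff hc]
  · rwa [← ofReal_mul_mem_slitPlane_iff hc, mul_div_cancel₀ _ hc']
  · simp only [mul_div_cancel₀ _ hc', sub_sub_cancel]

lemma exp_mem_slitPlane_iff_of_abs_im_le_pi {z : ℂ} (hz : |z.im| ≤ π) :
    exp z ∈ slitPlane ↔ |z.im| < π := by
  refine ⟨fun h => hz.lt_of_ne fun hpi => ?_, fun h => ?_⟩
  · rcases eq_or_eq_neg_of_abs_eq hpi with him | him <;>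
      simp [mem_slitPlane_iff, exp_re, exp_im, him, (Real.exp_pos z.re).le.not_gt] at h
  · exact expOpenPartialHomeomorph.map_source (abs_lt.1 h)

end SlitPlane

section LinearProd

open Complex Set
open scoped Real

variable {ι : Type*} [Fintype ι] {a : ι → ℝ} {w : ℂ}

/-- The monic polynomial function with roots `-a i`, listed with multiplicity. -/
noncomputable def linearProd (a : ι → ℝ) (w : ℂ) : ℂ := ∏ i, (w + a i)

/-- The logarithm of `linearProd a` obtained by summing the principal logarithms of its factors;
its imaginary part need not lie in `(-π, π]`. -/
noncomputable def logLinearProd (a : ι → ℝ) (w : ℂ) : ℂ := ∑ i, log (w + a i)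

/-- The part of the right half-plane on which `logLinearProd a` is the principal logarithm of
`linearProd a`, the boundary value `π` of the argument being excluded. -/
def principalSector (a : ι → ℝ) : Set ℂ := {w | 0 < w.re ∧ |(logLinearProd a w).im| < π}

lemma isClosedMap_linearProd (a : ι → ℝ) : IsClosedMap (linearProd a) := by
  have heval : (∏ i, (Polynomial.X + Polynomial.C (a i : ℂ))).eval = linearProd a := by
    ext w
    simp [linearProd, Polynomial.eval_prod]
  exact heval ▸ Polynomial.isClosedMap_eval _

lemma differentiable_linearProd (a : ι → ℝ) : Differentiable ℂ (linearProd a) := by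
  unfold linearProd
  fun_prop

lemma exp_logLinearProd (ha : 0 ≤ a) (hw : w ∈ slitPlane) :
    exp (logLinearProd a w) = linearProd a w := by
  rw [logLinearProd, exp_sum]
  exact Finset.prod_congr rfl fun i _ =>
    exp_log (slitPlane_ne_zero (add_ofReal_mem_slitPlane hw (ha i)))

lemma im_logLinearProd (a : ι → ℝ) (w : ℂ) :
    (logLinearProd a w).im = ∑ i, (w + a i).arg := by
  simp only [logLinearProd, im_sum, log_im]

lemma hasDerivAt_logLinearProd (ha : 0 ≤ a) (hw : w ∈ slitPlane) :
    HasDerivAt (logLinearProd a) (∑ i, (w + a i)⁻¹) w := by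
  refine HasDerivAt.fun_sum fun i _ => ?_
  simpa using ((hasDerivAt_id w).add_const (a i : ℂ)).clog (add_ofReal_mem_slitPlane hw (ha i))

lemma re_sum_inv_pos [Nonempty ι] (ha : 0 ≤ a) (hw : 0 < w.re) :
    0 < (∑ i, (w + a i)⁻¹).re := by
  rw [re_sum]
  refine Finset.sum_pos (fun i _ => ?_) Finset.univ_nonempty
  have hre : 0 < (w + a i).re := by simpa using add_pos_of_pos_of_nonneg hw (ha i)
  rw [inv_re]
  exact div_pos hre (normSq_pos.2 (ne_of_apply_ne re hre.ne'))

lemma injOn_logLinearProd [Nonempty ι] (ha : 0 ≤ a) :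
    InjOn (logLinearProd a) {w | 0 < w.re} :=
  injOn_of_re_deriv_pos (convex_halfSpace_re_gt 0)
    (fun _ hw => hasDerivAt_logLinearProd ha (Or.inl hw)) (fun _ hw => re_sum_inv_pos ha hw)

lemma deriv_linearProd_ne_zero [Nonempty ι] (ha : 0 ≤ a) (hw : 0 < w.re) :
    deriv (linearProd a) w ≠ 0 := by
  have hslit : w ∈ slitPlane := Or.inl hw
  have heq : linearProd a =ᶠ[nhds w] fun z => exp (logLinearProd a z) := by
    filter_upwards [isOpen_slitPlane.mem_nhds hslit] with z hz using (exp_logLinearProd ha hz).symm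
  rw [((hasDerivAt_logLinearProd ha hslit).cexp.congr_of_eventuallyEq heq).deriv]
  exact mul_ne_zero (exp_ne_zero _) (ne_of_apply_ne re (re_sum_inv_pos ha hw).ne')

lemma isOpen_principalSector (ha : 0 ≤ a) : IsOpen (principalSector a) := by
  have hcont : ContinuousOn (fun w => |(logLinearProd a w).im|) {w | 0 < w.re} := fun w hw =>
    (continuous_im.continuousAt.comp
      (hasDerivAt_logLinearProd ha (Or.inl hw)).continuousAt).abs.continuousWithinAt
  exact hcont.isOpen_inter_preimage (isOpen_lt continuous_const continuous_re) isOpen_Iio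

lemma ofReal_mem_principalSector (ha : 0 ≤ a) {x : ℝ} (hx : 0 < x) :
    (x : ℂ) ∈ principalSector a := by
  have harg (i : ι) : ((x : ℂ) + a i).arg = 0 := by
    rw [← ofReal_add, arg_ofReal_of_nonneg (add_nonneg hx.le (ha i))]
  exact ⟨by simpa using hx, by simp [im_logLinearProd, harg, Real.pi_pos]⟩

lemma zero_mem_closure_principalSector (ha : 0 ≤ a) : 0 ∈ closure (principalSector a) := by
  have hlim : Filter.Tendsto ((↑) : ℝ → ℂ) (nhdsWithin 0 (Ioi 0)) (nhds 0) :=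
    (continuous_ofReal.tendsto' 0 0 ofReal_zero).mono_left nhdsWithin_le_nhds
  refine mem_closure_of_tendsto hlim ?_
  filter_upwards [self_mem_nhdsWithin] with x hx using ofReal_mem_principalSector ha hx

lemma log_linearProd (ha : 0 ≤ a) (hw : w ∈ principalSector a) :
    log (linearProd a w) = logLinearProd a w := by
  obtain ⟨hlo, hhi⟩ := abs_lt.1 hw.2
  rw [← exp_logLinearProd ha (Or.inl hw.1), log_exp hlo hhi.le]

lemma mapsTo_linearProd (ha : 0 ≤ a) :
    MapsTo (linearProd a) (principalSector a) slitPlane := fun w hw => by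
  rw [← exp_logLinearProd ha (Or.inl hw.1)]
  exact (exp_mem_slitPlane_iff_of_abs_im_le_pi hw.2.le).2 hw.2

lemma injOn_linearProd [Nonempty ι] (ha : 0 ≤ a) :
    InjOn (linearProd a) (principalSector a) := fun w hw z hz h =>
  injOn_logLinearProd ha hw.1 hz.1 <| by rw [← log_linearProd ha hw, h, log_linearProd ha hz]

section DoubleRoot

variable {i j : ι}

lemma pi_le_sum_arg_of_im_pos (hij : i ≠ j) (hi : a i = 0) (hj : a j = 0) (hw : w.re = 0)
    (him : 0 < w.im) : π ≤ ∑ k, (w + a k).arg := by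
  have harg : w.arg = π / 2 := arg_eq_pi_div_two_iff.2 ⟨hw, him⟩
  calc π = (w + a i).arg + (w + a j).arg := by simp [hi, hj, harg]
    _ ≤ ∑ k, (w + a k).arg :=
      Finset.add_le_sum (f := fun k => (w + a k).arg)
        (fun k _ => arg_nonneg_iff.2 (by simpa using him.le))
        (Finset.mem_univ i) (Finset.mem_univ j) hij

lemma sum_arg_le_neg_pi_of_im_neg (hij : i ≠ j) (hi : a i = 0) (hj : a j = 0) (hw : w.re = 0)
    (him : w.im < 0) : ∑ k, (w + a k).arg ≤ -π := by
  have harg : w.arg = -(π / 2) := arg_eq_neg_pi_div_two_iff.2 ⟨hw, him⟩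
  rw [le_neg, ← Finset.sum_neg_distrib]
  calc π = -(w + a i).arg + -(w + a j).arg := by simp [hi, hj, harg]
    _ ≤ ∑ k, -(w + a k).arg :=
      Finset.add_le_sum (f := fun k => -(w + a k).arg)
        (fun k _ => neg_nonneg.2 (arg_neg_iff.2 (by simpa using him)).le)
        (Finset.mem_univ i) (Finset.mem_univ j) hij

lemma pi_le_abs_im_logLinearProd (hij : i ≠ j) (hi : a i = 0) (hj : a j = 0) (hw : w.re = 0)
    (h0 : w ≠ 0) : π ≤ |(logLinearProd a w).im| := by
  have him : w.im ≠ 0 := fun h => h0 (Complex.ext hw h)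
  rw [im_logLinearProd, le_abs']
  exact him.lt_or_gt.imp (sum_arg_le_neg_pi_of_im_neg hij hi hj hw)
    (pi_le_sum_arg_of_im_pos hij hi hj hw)

lemma closure_principalSector_inter_preimage_subset (ha : 0 ≤ a) (hij : i ≠ j) (hi : a i = 0)
    (hj : a j = 0) :
    closure (principalSector a) ∩ linearProd a ⁻¹' slitPlane ⊆ principalSector a := by
  rintro w ⟨hw, hP⟩
  have hre : 0 ≤ w.re :=
    closure_minimal (fun z hz => hz.1.le) (isClosed_le continuous_const continuous_re) hw
  have h0 : w ≠ 0 := by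
    rintro rfl
    have hzero : linearProd a 0 = 0 := Finset.prod_eq_zero (Finset.mem_univ i) (by simp [hi])
    exact slitPlane_ne_zero hP hzero
  have hslit := mem_slitPlane_of_re_nonneg hre h0
  have habs : |(logLinearProd a w).im| ≤ π := by
    have hcont : ContinuousAt (fun z => |(logLinearProd a z).im|) w :=
      (continuous_im.continuousAt.comp (hasDerivAt_logLinearProd ha hslit).continuousAt).abs
    have hbound : (fun z => |(logLinearProd a z).im|) '' principalSector a ⊆ Iic π :=
      image_subset_iff.2 fun z hz => hz.2.le
    exact closure_minimal hbound isClosed_Iic (mem_closure_image hcont hw)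
  have hstrip : |(logLinearProd a w).im| < π :=
    (exp_mem_slitPlane_iff_of_abs_im_le_pi habs).1 (by rwa [exp_logLinearProd ha hslit])
  have hre_ne : w.re ≠ 0 := fun h =>
    (pi_le_abs_im_logLinearProd hij hi hj h h0).not_gt hstrip
  exact ⟨hre.lt_of_ne' hre_ne, hstrip⟩

theorem bijOn_linearProd (ha : 0 ≤ a) (hij : i ≠ j) (hi : a i = 0) (hj : a j = 0) :
    BijOn (linearProd a) (principalSector a) slitPlane := by
  have : Nonempty ι := ⟨i⟩
  have hone : (1 : ℂ) ∈ principalSector a := by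
    simpa using ofReal_mem_principalSector ha one_pos
  have hopen : IsOpen (linearProd a '' principalSector a) :=
    isOpen_image_of_deriv_ne_zero (isOpen_principalSector ha)
      (differentiable_linearProd a).differentiableOn
      (fun _ hw => deriv_linearProd_ne_zero ha hw.1)
  refine ⟨mapsTo_linearProd ha, injOn_linearProd ha, ?_⟩
  exact subset_image_of_closure_inter_preimage_subset
    (starConvex_one_slitPlane.isPathConnected one_mem_slitPlane).isConnected.isPreconnected
    (isClosedMap_linearProd a) hopen ⟨_, mapsTo_linearProd ha hone, mem_image_of_mem _ hone⟩
    (closure_principalSector_inter_preimage_subset ha hij hi hj)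

end DoubleRoot

end LinearProd

section Uhat

open Complex Set

lemma slitDisk_eq_inter (x ε : ℝ) :
    slitDisk x ε = {z : ℂ | x - z ∈ slitPlane} ∩ Metric.ball 0 (x + ε) := by
  ext z
  rw [slitDisk, inter_comm, mem_sdiff, mem_inter_iff, and_congr_right_iff]
  intro hz
  rw [mem_ball_zero_iff] at hz
  rw [mem_ofPred_eq, mem_slitPlane_iff, ← not_iff_not, not_not]
  push Not
  constructor
  · rintro ⟨t, ht, rfl⟩
    simpa using ht.1
  · rintro ⟨hre, him⟩
    simp only [sub_re, ofReal_re, sub_nonpos, sub_im, ofReal_im, zero_sub, neg_eq_zero] at hre him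
    exact ⟨z.re, ⟨hre, (re_le_norm z).trans hz.le⟩, Complex.ext rfl him.symm⟩

/-- The negated roots of `w ^ 3 * (w + 2)`, the polynomial of `û` in the coordinate `w = 1 - H`. -/
def uhatShifts : Fin 4 → ℝ := ![0, 0, 0, 2]

/-- The sheet containing `0` of the inverse of `û` over `ℂ ∖ [u_c, ∞)`, described in the coordinate
`1 - H`. -/
def uhatSheet : Set ℂ := {H | 1 - H ∈ principalSector uhatShifts}

lemma uhatShifts_nonneg : 0 ≤ uhatShifts := by
  intro i
  fin_cases i <;> simp [uhatShifts]

lemma uc_pos : 0 < uc := by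
  unfold uc tc
  positivity

lemma linearProd_uhatShifts (w : ℂ) : linearProd uhatShifts w = w ^ 3 * (w + 2) := by
  simp only [linearProd, uhatShifts, Fin.prod_univ_four, Fin.isValue, Matrix.cons_val, ofReal_zero,
    ofReal_ofNat]
  ring

lemma uhat_eq (H : ℂ) :
    uhat H = uc - (uc / 3 : ℝ) * linearProd uhatShifts (1 - H) := by
  rw [uhat, linearProd_uhatShifts]
  push_cast
  ring

lemma uhat_zero : uhat 0 = 0 := by
  simp [uhat]

lemma uhat_one : uhat 1 = uc := by
  simp [uhat_eq, linearProd_uhatShifts]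

lemma continuous_uhat : Continuous uhat := by
  unfold uhat
  fun_prop

lemma deriv_uhat_ne_zero {H : ℂ} (hH : H ∈ uhatSheet) : deriv uhat H ≠ 0 := by
  rw [funext uhat_eq, deriv_const_sub, deriv_const_mul_field, deriv_comp_const_sub, mul_neg,
    neg_neg]
  exact mul_ne_zero (ofReal_ne_zero.2 (div_pos uc_pos three_pos).ne')
    (deriv_linearProd_ne_zero uhatShifts_nonneg hH.1)

lemma isOpen_uhatSheet : IsOpen uhatSheet :=
  (isOpen_principalSector uhatShifts_nonneg).preimage (continuous_const.sub continuous_id)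

lemma zero_mem_uhatSheet : 0 ∈ uhatSheet := by
  simpa [uhatSheet] using ofReal_mem_principalSector uhatShifts_nonneg one_pos

lemma one_notMem_uhatSheet : 1 ∉ uhatSheet := fun h => by
  simpa using h.1

lemma one_mem_closure_uhatSheet : 1 ∈ closure uhatSheet := by
  have hpreimage := (Homeomorph.subLeft (1 : ℂ)).preimage_closure (principalSector uhatShifts)
  have hone : (1 : ℂ) ∈ Homeomorph.subLeft (1 : ℂ) ⁻¹' closure (principalSector uhatShifts) := by
    simpa using zero_mem_closure_principalSector uhatShifts_nonneg
  exact hpreimage ▸ hone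

theorem bijOn_uhat : BijOn uhat uhatSheet {z : ℂ | uc - z ∈ slitPlane} := by
  have hc : 0 < uc / 3 := div_pos uc_pos three_pos
  have hreflect : BijOn (fun H : ℂ => 1 - H) uhatSheet (principalSector uhatShifts) :=
    (Equiv.subLeft (1 : ℂ)).bijective.bijOn_preimage
  have hP : BijOn (linearProd uhatShifts) (principalSector uhatShifts) slitPlane :=
    bijOn_linearProd (i := 0) (j := 1) uhatShifts_nonneg (by decide) rfl rfl
  have hcomp := (bijOn_sub_ofReal_mul_slitPlane uc hc).comp (hP.comp hreflect)
  exact hcomp.congr fun H _ => (uhat_eq H).symm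

theorem bijOn_uhat_slitDisk (ε : ℝ) :
    BijOn uhat (uhatSheet ∩ uhat ⁻¹' Metric.ball 0 (uc + ε)) (slitDisk uc ε) := by
  rw [slitDisk_eq_inter]
  have h := bijOn_uhat.subset_right (inter_subset_left (t := Metric.ball 0 (uc + ε)))
  rwa [preimage_inter, ← inter_assoc, inter_eq_left.2 bijOn_uhat.mapsTo.subset_preimage] at h

end Uhat

/-- there is an open neighborhood `V` of `0` with `1 ∈ ∂V` such that `û`
restricted to `V` is a conformal bijection onto a slit disk at `u_c`, and `û(H) → u_c`
as `H → 1` within `V`. -/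
theorem statement4 :
    ∃ (V : Set ℂ) (ε : ℝ), IsOpen V ∧ (0 : ℂ) ∈ V ∧ (1 : ℂ) ∈ frontier V ∧ 0 < ε ∧
      Set.BijOn uhat V (slitDisk uc ε) ∧
      (∀ s ∈ V, deriv uhat s ≠ 0) ∧
      Filter.Tendsto uhat (nhdsWithin (1 : ℂ) V) (nhds ((uc : ℝ) : ℂ)) := by
  have hopen : IsOpen (uhat ⁻¹' Metric.ball 0 (uc + 1)) :=
    Metric.isOpen_ball.preimage continuous_uhat
  have hV : IsOpen (uhatSheet ∩ uhat ⁻¹' Metric.ball 0 (uc + 1)) :=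
    isOpen_uhatSheet.inter hopen
  have hfrontier : 1 ∈ frontier (uhatSheet ∩ uhat ⁻¹' Metric.ball 0 (uc + 1)) := by
    rw [hV.frontier_eq]
    have hball : uhat 1 ∈ Metric.ball 0 (uc + 1) := by simp [uhat_one, abs_of_pos uc_pos]
    exact ⟨hopen.closure_inter ⟨one_mem_closure_uhatSheet, hball⟩,
      fun h => one_notMem_uhatSheet h.1⟩
  exact ⟨_, 1, hV, ⟨zero_mem_uhatSheet, by simpa [uhat_zero] using add_pos uc_pos one_pos⟩,
    hfrontier, one_pos, bijOn_uhat_slitDisk 1, fun H hH => deriv_uhat_ne_zero hH.1,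
    (continuous_uhat.tendsto' 1 _ uhat_one).mono_left nhdsWithin_le_nhds⟩
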